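/- arXiv:2310.05995 — 6 statements merged into one kernel-verified Lean document; each statement's English description precedes it below -/
import Mathlib

section
/- Let (n_p, n_r, ℓ_p, ℓ_r, S) be a paper assignment instance in which S is blockwise dominant with block identity A ∈ ℝ_{≥0}^{k×k} and block sizes (p_1,…,p_k), (r_1,…,r_k). Assume p_i·ℓ_p ≤ r_i·ℓ_r and Q·r_i ≥ ℓ_p for all i ∈ {1,…,k}. Let x* be the within-group uniform assignment, defined by x*_{p,r} = ℓ_p/r_i if paper p and reviewer r both belong to group i, and x*_{p,r} = 0 otherwise. Then x* ∈ F(Q), and for every feasible assignment x ∈ F(Q), Quality(x*) ≥ Quality(x); moreover, Quality(x) = Quality(x*) if and only if x_{p,r} > 0 only when paper p and reviewer r belong to the same group. -/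
open Finset

noncomputable section

/-- The feasible set `F(Q)` of randomized assignments. -/
def Feasible (np nr lp lr : ℕ) (Q : ℝ) (x : Fin np → Fin nr → ℝ) : Prop :=
  (∀ p, ∑ r, x p r = (lp : ℝ)) ∧ (∀ r, ∑ p, x p r ≤ (lr : ℝ)) ∧
    ∀ p r, 0 ≤ x p r ∧ x p r ≤ Q

/-- `Quality(x) = Σ_{p,r} x_{p,r} S_{p,r}`. -/
def Quality {np nr : ℕ} (S x : Fin np → Fin nr → ℝ) : ℝ :=
  ∑ p, ∑ r, x p r * S p r

/-- `PQuality_f(x) = Σ_{p,r} S_{p,r} f(x_{p,r})`. -/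
def PQuality {np nr : ℕ} (f : ℝ → ℝ) (S x : Fin np → Fin nr → ℝ) : ℝ :=
  ∑ p, ∑ r, S p r * f (x p r)

/-- `PLRA(Q)`: the set of maximizers of `Quality` over `F(Q)`. -/
def PLRA (np nr lp lr : ℕ) (Q : ℝ) (S : Fin np → Fin nr → ℝ) :
    Set (Fin np → Fin nr → ℝ) :=
  {x | Feasible np nr lp lr Q x ∧
    ∀ y, Feasible np nr lp lr Q y → Quality S y ≤ Quality S x}

/-- `PM(Q,f)`: the set of maximizers of `PQuality_f` over `F(Q)`. -/
def PM (np nr lp lr : ℕ) (Q : ℝ) (f : ℝ → ℝ) (S : Fin np → Fin nr → ℝ) :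
    Set (Fin np → Fin nr → ℝ) :=
  {x | Feasible np nr lp lr Q x ∧
    ∀ y, Feasible np nr lp lr Q y → PQuality f S y ≤ PQuality f S x}

/-- `Maxprob(x) = max_{p,r} x_{p,r}`. -/
def Maxprob {np nr : ℕ} (x : Fin np → Fin nr → ℝ) : ℝ := ⨆ p, ⨆ r, x p r

/-- `AvgMaxp(x) = (1/n_p) Σ_p max_r x_{p,r}`. -/
def AvgMaxp {np nr : ℕ} (x : Fin np → Fin nr → ℝ) : ℝ := (∑ p, ⨆ r, x p r) / np

/-- `Support(x) = #{(p,r) : x_{p,r} > 0}`. -/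
def SupportSize {np nr : ℕ} (x : Fin np → Fin nr → ℝ) : ℕ :=
  {pr : Fin np × Fin nr | 0 < x pr.1 pr.2}.ncard

/-- `Entropy(x) = -Σ_{p,r} x_{p,r} ln x_{p,r}` (with `Real.log 0 = 0`). -/
def Entropy {np nr : ℕ} (x : Fin np → Fin nr → ℝ) : ℝ :=
  -∑ p, ∑ r, x p r * Real.log (x p r)

/-- `L2Norm(x) = sqrt(Σ_{p,r} x_{p,r}²)`. -/
def L2Norm {np nr : ℕ} (x : Fin np → Fin nr → ℝ) : ℝ :=
  Real.sqrt (∑ p, ∑ r, (x p r) ^ 2)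

/-- A perturbation function: `f : [0,1] → [0,1]`, `f 0 = 0`, nondecreasing and concave
on `[0,1]` (differentiability is recorded separately via `HasDerivWithinAt`). -/
def IsPerturbation (f : ℝ → ℝ) : Prop :=
  f 0 = 0 ∧ (∀ t ∈ Set.Icc (0 : ℝ) 1, f t ∈ Set.Icc (0 : ℝ) 1) ∧
    MonotoneOn f (Set.Icc (0 : ℝ) 1) ∧ ConcaveOn ℝ (Set.Icc (0 : ℝ) 1) f

/-- `Dom(A) = sup {α : A i i ≥ α · A i j for all i ≠ j}`. -/
def DomA {k : ℕ} (A : Fin k → Fin k → ℝ) : ℝ :=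
  sSup {α : ℝ | ∀ i j, i ≠ j → α * A i j ≤ A i i}

/-- the within-group uniform assignment `x*` is feasible and maximizes
quality; a feasible assignment attains the same quality iff it only assigns
within groups. -/
theorem stmt2 (np nr k lp lr : ℕ) (Q : ℝ) (hQ : Q ∈ Set.Icc (0 : ℝ) 1)
    (S : Fin np → Fin nr → ℝ) (A : Fin k → Fin k → ℝ)
    (pg : Fin np → Fin k) (rg : Fin nr → Fin k)
    (hA0 : ∀ i j, 0 ≤ A i j)
    (hSA : ∀ p r, S p r = A (pg p) (rg r))
    (hdiag : ∀ i j, i ≠ j → A i j < A i i)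
    (hload : ∀ i : Fin k,
      {p : Fin np | pg p = i}.ncard * lp ≤ {r : Fin nr | rg r = i}.ncard * lr)
    (hQr : ∀ i : Fin k, (lp : ℝ) ≤ Q * {r : Fin nr | rg r = i}.ncard)
    (xstar : Fin np → Fin nr → ℝ)
    (hxstar : ∀ p r, xstar p r =
      if pg p = rg r then (lp : ℝ) / {r' : Fin nr | rg r' = pg p}.ncard else 0) :
    Feasible np nr lp lr Q xstar ∧
    (∀ x, Feasible np nr lp lr Q x → Quality S x ≤ Quality S xstar) ∧
    (∀ x, Feasible np nr lp lr Q x →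
      (Quality S x = Quality S xstar ↔ ∀ p r, 0 < x p r → pg p = rg r)) := by
  have hcr : ∀ i, ({r : Fin nr | rg r = i}.ncard) = (univ.filter (fun r => rg r = i)).card := by
    intro i
    rw [← Set.ncard_coe_finset]; simp
  have hcp : ∀ i, ({p : Fin np | pg p = i}.ncard) = (univ.filter (fun p => pg p = i)).card := by
    intro i
    rw [← Set.ncard_coe_finset]; simp
  simp only [hcr] at hxstar hQr
  simp only [hcr, hcp] at hload
  have hz : ∀ i, ((univ.filter (fun r => rg r = i)).card : ℝ) = 0 → (lp : ℝ) = 0 := by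
    intro i hi
    have h := hQr i
    rw [hi, mul_zero] at h
    exact le_antisymm h (Nat.cast_nonneg _)
  have hfeas : Feasible np nr lp lr Q xstar := by
    refine ⟨?_, ?_, ?_⟩
    · intro p
      simp only [hxstar]
      rw [← Finset.sum_filter, Finset.sum_const, nsmul_eq_mul]
      have : (univ.filter (fun r => pg p = rg r)) = univ.filter (fun r => rg r = pg p) := by
        ext r; simp [eq_comm]
      rw [this]
      by_cases h0 : ((univ.filter (fun r => rg r = pg p)).card : ℝ) = 0
      · rw [h0, hz _ h0]; simp
      · field_simp
    · intro r
      have : ∀ p, xstar p r = if pg p = rg r then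
          (lp : ℝ) / (univ.filter (fun r' => rg r' = rg r)).card else 0 := by
        intro p
        rw [hxstar]
        split_ifs with h
        · rw [h]
        · rfl
      simp only [this]
      rw [← Finset.sum_filter, Finset.sum_const, nsmul_eq_mul]
      have hpos : (0 : ℝ) < (univ.filter (fun r' => rg r' = rg r)).card := by
        exact_mod_cast Finset.card_pos.mpr ⟨r, by simp⟩
      rw [← mul_div_assoc, div_le_iff₀ hpos]
      have h := hload (rg r)
      rw [mul_comm (lr : ℝ)]
      exact_mod_cast h
    · intro p r
      rw [hxstar]
      split_ifs with h
      · have hpos : (0 : ℝ) < (univ.filter (fun r' => rg r' = pg p)).card := by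
          exact_mod_cast Finset.card_pos.mpr ⟨r, by simp [h]⟩
        exact ⟨by positivity, by rw [div_le_iff₀ hpos]; exact hQr _⟩
      · exact ⟨le_rfl, hQ.1⟩
  have hqual : ∀ x, Feasible np nr lp lr Q x → Quality S x =
      (∑ p, (lp : ℝ) * A (pg p) (pg p)) -
        ∑ p, ∑ r, x p r * (A (pg p) (pg p) - A (pg p) (rg r)) := by
    intro x hx
    unfold Quality
    rw [← Finset.sum_sub_distrib]
    refine Finset.sum_congr rfl fun p _ => ?_
    rw [← hx.1 p, Finset.sum_mul, ← Finset.sum_sub_distrib]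
    refine Finset.sum_congr rfl fun r _ => ?_
    rw [hSA]; ring
  have hAle : ∀ i j, 0 ≤ A i i - A i j := by
    intro i j
    by_cases h : i = j
    · subst h; simp
    · linarith [hdiag i j h]
  have hterm : ∀ x, Feasible np nr lp lr Q x → ∀ p r,
      0 ≤ x p r * (A (pg p) (pg p) - A (pg p) (rg r)) :=
    fun x hx p r => mul_nonneg (hx.2.2 p r).1 (hAle _ _)
  have hstar : Quality S xstar = ∑ p, (lp : ℝ) * A (pg p) (pg p) := by
    rw [hqual _ hfeas, sub_eq_self]
    refine Finset.sum_eq_zero fun p _ => Finset.sum_eq_zero fun r _ => ?_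
    rw [hxstar]
    split_ifs with h
    · rw [h]; simp
    · simp
  refine ⟨hfeas, ?_, ?_⟩
  · intro x hx
    rw [hstar, hqual x hx]
    have := Finset.sum_nonneg fun p (_ : p ∈ univ) =>
      Finset.sum_nonneg fun r (_ : r ∈ univ) => hterm x hx p r
    linarith
  · intro x hx
    rw [hstar, hqual x hx, sub_eq_self,
      Finset.sum_eq_zero_iff_of_nonneg
        (fun p _ => Finset.sum_nonneg fun r _ => hterm x hx p r)]
    constructor
    · intro h p r hpr
      have h1 := (Finset.sum_eq_zero_iff_of_nonneg
        (fun r _ => hterm x hx p r)).1 (h p (mem_univ _)) r (mem_univ _)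
      by_contra hne
      have h2 := mul_pos hpr (sub_pos.2 (hdiag _ _ hne))
      linarith
    · intro h p _
      refine Finset.sum_eq_zero fun r _ => ?_
      rcases (hx.2.2 p r).1.eq_or_lt with h0 | h0
      · rw [← h0, zero_mul]
      · rw [h p r h0]; simp
end
end

section
/- Let (n_p, n_r, ℓ_p, ℓ_r, S) be a paper assignment instance in which S is blockwise dominant with block identity A ∈ ℝ_{≥0}^{k×k} and block sizes (p_1,…,p_k), (r_1,…,r_k). Assume p_i·ℓ_p ≤ r_i·ℓ_r and Q·r_i ≥ ℓ_p for all i ∈ {1,…,k}. Then every x ∈ PLRA(Q) assigns paper p to reviewer r with positive probability only if p and r belong to the same group; that is, x_{p,r} > 0 implies that paper p and reviewer r are in the same group. -/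
open Finset

noncomputable section

/-- every PLRA solution on a blockwise dominant similarity matrix
assigns positive probability only within groups. -/
theorem stmt3 (np nr k lp lr : ℕ) (Q : ℝ) (hQ : Q ∈ Set.Icc (0 : ℝ) 1)
    (S : Fin np → Fin nr → ℝ) (A : Fin k → Fin k → ℝ)
    (pg : Fin np → Fin k) (rg : Fin nr → Fin k)
    (hA0 : ∀ i j, 0 ≤ A i j)
    (hSA : ∀ p r, S p r = A (pg p) (rg r))
    (hdiag : ∀ i j, i ≠ j → A i j < A i i)
    (hload : ∀ i : Fin k,
      {p : Fin np | pg p = i}.ncard * lp ≤ {r : Fin nr | rg r = i}.ncard * lr)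
    (hQr : ∀ i : Fin k, (lp : ℝ) ≤ Q * {r : Fin nr | rg r = i}.ncard) :
    ∀ x ∈ PLRA np nr lp lr Q S, ∀ p r, 0 < x p r → pg p = rg r := by
  classical
  intro x hx p₀ r₀ hpos
  obtain ⟨⟨hx1, hx2, hx3⟩, hmax⟩ := hx
  by_contra hne
  have hn : ∀ i : Fin k, {r : Fin nr | rg r = i}.ncard = #{r : Fin nr | rg r = i} := by
    intro i
    rw [← Set.ncard_coe_finset]
    congr 1
    ext r
    simp
  have hm : ∀ i : Fin k, {p : Fin np | pg p = i}.ncard = #{p : Fin np | pg p = i} := by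
    intro i
    rw [← Set.ncard_coe_finset]
    congr 1
    ext r
    simp
  simp only [hn, hm] at hload hQr
  have hcpos : ∀ r : Fin nr, (0 : ℝ) < (#{s : Fin nr | rg s = rg r} : ℕ) := by
    intro r
    exact_mod_cast Finset.card_pos.mpr ⟨r, by simp⟩
  let y : Fin np → Fin nr → ℝ := fun p r =>
    if rg r = pg p then (lp : ℝ) / (#{s : Fin nr | rg s = pg p} : ℕ) else 0
  have hy1 : ∀ p, ∑ r, y p r = (lp : ℝ) := by
    intro p
    simp only [y]
    rw [← Finset.sum_filter, Finset.sum_const, nsmul_eq_mul]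
    by_cases h0 : ((#{s : Fin nr | rg s = pg p} : ℕ) : ℝ) = 0
    · have h1 := hQr (pg p)
      rw [h0] at h1 ⊢
      have h2 : (0 : ℝ) ≤ lp := Nat.cast_nonneg lp
      linarith
    · field_simp
  have hyF : Feasible np nr lp lr Q y := by
    refine ⟨hy1, ?_, ?_⟩
    · intro r
      have h1 : ∑ p, y p r = ∑ p, if pg p = rg r then
          (lp : ℝ) / (#{s : Fin nr | rg s = rg r} : ℕ) else 0 := by
        refine Finset.sum_congr rfl fun p _ => ?_
        simp only [y]
        by_cases h : pg p = rg r
        · simp [h]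
        · rw [if_neg h, if_neg (fun h' => h h'.symm)]
      rw [h1, ← Finset.sum_filter, Finset.sum_const, nsmul_eq_mul, ← mul_div_assoc,
        div_le_iff₀ (hcpos r), mul_comm (lr : ℝ)]
      exact_mod_cast hload (rg r)
    · intro p r
      simp only [y]
      split_ifs with h
      · refine ⟨by positivity, ?_⟩
        rw [← h, div_le_iff₀ (hcpos r)]
        exact hQr (rg r)
      · exact ⟨le_rfl, hQ.1⟩
  have hqy : Quality S y = ∑ p, ∑ r, x p r * A (pg p) (pg p) := by
    refine Finset.sum_congr rfl fun p _ => ?_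
    rw [← Finset.sum_mul, hx1 p, ← hy1 p, Finset.sum_mul]
    refine Finset.sum_congr rfl fun r _ => ?_
    by_cases h : rg r = pg p
    · rw [hSA, h]
    · simp [y, h]
  have hle : ∀ p r, x p r * S p r ≤ x p r * A (pg p) (pg p) := by
    intro p r
    refine mul_le_mul_of_nonneg_left ?_ (hx3 p r).1
    rw [hSA]
    by_cases h : pg p = rg r
    · rw [← h]
    · exact (hdiag _ _ h).le
  have hlt : Quality S x < Quality S y := by
    rw [hqy]
    refine Finset.sum_lt_sum (fun p _ => Finset.sum_le_sum fun r _ => hle p r)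
      ⟨p₀, Finset.mem_univ _, Finset.sum_lt_sum (fun r _ => hle p₀ r)
        ⟨r₀, Finset.mem_univ _, ?_⟩⟩
    refine mul_lt_mul_of_pos_left ?_ hpos
    rw [hSA]
    exact hdiag _ _ hne
  exact absurd (hmax y hyF) (not_le.mpr hlt)
end
end

section
/- Let f be a perturbation function, S ∈ ℝ_{≥0}^{n_p×n_r}, w a positive integer, and x ∈ [0,1]^{n_p×n_r}. Define the rounded matrix x′ by x′_{p,r} = ⌊w·x_{p,r}⌋/w for all (p,r). Then PQuality_f(x) − PQuality_f(x′) ≤ f(1/w)·Σ_{p,r} S_{p,r}. In particular, if x maximizes PQuality_f over a set containing x′, the rounded matrix loses at most f(1/w)·Σ_{p,r} S_{p,r} in perturbed quality relative to the optimum. -/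
open Finset

noncomputable section

/-- A perturbation function lies above its chords from the origin. -/
theorem IsPerturbation.chord {f : ℝ → ℝ} (hf : IsPerturbation f) {s a : ℝ}
    (hs : 0 < s) (hs1 : s ≤ 1) (ha : 0 ≤ a) (has : a ≤ s) : a / s * f s ≤ f a := by
  obtain ⟨h0, -, -, hc⟩ := hf
  have h1 : a / s ≤ 1 := (div_le_one hs).2 has
  have h := hc.2 (x := s) (y := 0) ⟨hs.le, hs1⟩ ⟨le_rfl, zero_le_one⟩
    (div_nonneg ha hs.le) (sub_nonneg.2 h1) (by ring)
  simpa [h0, div_mul_cancel₀ a hs.ne'] using h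

/-- Perturbation functions are subadditive on `[0,1]`. -/
theorem IsPerturbation.subadd {f : ℝ → ℝ} (hf : IsPerturbation f) {a d : ℝ}
    (ha : 0 ≤ a) (hd : 0 ≤ d) (h1 : a + d ≤ 1) : f (a + d) ≤ f a + f d := by
  rcases (add_nonneg ha hd).eq_or_lt with h | h
  · have ea : a = 0 := by linarith
    have ed : d = 0 := by linarith
    simp [ea, ed, hf.1]
  · have e1 := hf.chord h h1 ha (by linarith)
    have e2 := hf.chord h h1 hd (by linarith)
    have e3 : a / (a + d) * f (a + d) + d / (a + d) * f (a + d) = f (a + d) := by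
      rw [← add_mul, ← add_div, div_self h.ne', one_mul]
    linarith

/-- rounding each entry of `x` down to a multiple of `1/w` loses at most
`f(1/w)·Σ_{p,r} S_{p,r}` in perturbed quality. -/
theorem stmt5 (np nr : ℕ) (S : Fin np → Fin nr → ℝ) (hS : ∀ p r, 0 ≤ S p r)
    (f : ℝ → ℝ) (hf : IsPerturbation f) (w : ℕ) (hw : 0 < w)
    (x x' : Fin np → Fin nr → ℝ)
    (hx : ∀ p r, x p r ∈ Set.Icc (0 : ℝ) 1)
    (hx' : ∀ p r, x' p r = (⌊(w : ℝ) * x p r⌋ : ℝ) / w) :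
    PQuality f S x - PQuality f S x' ≤ f (1 / w) * ∑ p, ∑ r, S p r := by
  have key : ∀ p r, f (x p r) - f (x' p r) ≤ f (1 / w) := by
    intro p r
    obtain ⟨hx0, hx1⟩ := hx p r
    have hw' : (0 : ℝ) < w := by exact_mod_cast hw
    have hw1 : (1 : ℝ) ≤ w := by exact_mod_cast hw
    have ha : 0 ≤ x' p r := by
      rw [hx']
      have : (0 : ℤ) ≤ ⌊(w : ℝ) * x p r⌋ := Int.floor_nonneg.2 (by positivity)
      have : (0 : ℝ) ≤ (⌊(w : ℝ) * x p r⌋ : ℝ) := by exact_mod_cast this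
      positivity
    have hle : x' p r ≤ x p r := by
      rw [hx', div_le_iff₀ hw', mul_comm]
      exact Int.floor_le _
    have hd : x p r - x' p r ≤ 1 / w := by
      rw [hx', sub_le_iff_le_add, ← add_div, le_div_iff₀ hw', mul_comm, add_comm]
      exact (Int.lt_floor_add_one _).le
    have hwI : (1 : ℝ) / w ≤ 1 := (div_le_one hw').2 hw1
    have h1 := hf.subadd ha (sub_nonneg.2 hle) (by linarith)
    have h2 : f (x p r - x' p r) ≤ f (1 / w) := hf.2.2.1
      ⟨by linarith, by linarith⟩ ⟨by positivity, hwI⟩ hd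
    rw [add_sub_cancel] at h1
    linarith
  unfold PQuality
  simp only [← Finset.sum_sub_distrib, Finset.mul_sum]
  refine Finset.sum_le_sum fun p _ => Finset.sum_le_sum fun r _ => ?_
  have := mul_le_mul_of_nonneg_left (key p r) (hS p r)
  linarith
end
end

section
/- Let (n_p, n_r, ℓ_p, ℓ_r, S) be a paper assignment instance, Q ∈ [0,1] such that F(Q) is nonempty, and let RM : ℝ^{n_p×n_r} → ℝ be a concave continuous function. Let Q_OPT = max{Quality(x) : x ∈ F(Q)}, and for τ ∈ [0,1] define RM*(τ) = max{RM(x) : x ∈ F(Q), Quality(x) ≥ τ·Q_OPT}. Then RM* is a concave and non-increasing function on [0,1]. -/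
open Finset

noncomputable section

lemma quality_continuous {np nr : ℕ} (S : Fin np → Fin nr → ℝ) : Continuous (Quality S) := by
  unfold Quality
  fun_prop

lemma quality_comb {np nr : ℕ} (S x y : Fin np → Fin nr → ℝ) (a b : ℝ) :
    Quality S (a • x + b • y) = a * Quality S x + b * Quality S y := by
  simp only [Quality, Pi.add_apply, Pi.smul_apply, smul_eq_mul, Finset.mul_sum,
    ← Finset.sum_add_distrib]
  refine Finset.sum_congr rfl fun p _ => Finset.sum_congr rfl fun r _ => ?_
  ring

lemma feasible_comb {np nr lp lr : ℕ} {Q : ℝ} {x y : Fin np → Fin nr → ℝ}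
    (hx : Feasible np nr lp lr Q x) (hy : Feasible np nr lp lr Q y) {a b : ℝ}
    (ha : 0 ≤ a) (hb : 0 ≤ b) (hab : a + b = 1) :
    Feasible np nr lp lr Q (a • x + b • y) := by
  obtain ⟨hx1, hx2, hx3⟩ := hx
  obtain ⟨hy1, hy2, hy3⟩ := hy
  refine ⟨fun p => ?_, fun r => ?_, fun p r => ?_⟩
  · simp only [Pi.add_apply, Pi.smul_apply, smul_eq_mul, Finset.sum_add_distrib,
      ← Finset.mul_sum, hx1, hy1]
    rw [← add_mul, hab, one_mul]
  · simp only [Pi.add_apply, Pi.smul_apply, smul_eq_mul, Finset.sum_add_distrib,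
      ← Finset.mul_sum]
    calc _ ≤ a * (lr : ℝ) + b * lr := by
          gcongr
          · exact hx2 r
          · exact hy2 r
      _ = lr := by rw [← add_mul, hab, one_mul]
  · simp only [Pi.add_apply, Pi.smul_apply, smul_eq_mul]
    have h1 := hx3 p r
    have h2 := hy3 p r
    constructor
    · exact add_nonneg (mul_nonneg ha h1.1) (mul_nonneg hb h2.1)
    · calc _ ≤ a * Q + b * Q := by
            gcongr
            · exact h1.2
            · exact h2.2
        _ = Q := by rw [← add_mul, hab, one_mul]

lemma feasible_compact (np nr lp lr : ℕ) (Q : ℝ) :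
    IsCompact {x | Feasible np nr lp lr Q x} := by
  have hK : IsCompact (Set.pi Set.univ fun _ : Fin np =>
      Set.pi Set.univ fun _ : Fin nr => Set.Icc (0 : ℝ) Q) :=
    isCompact_univ_pi fun _ => isCompact_univ_pi fun _ => isCompact_Icc
  refine hK.of_isClosed_subset ?_ ?_
  · simp only [Feasible, Set.setOf_and, Set.setOf_forall]
    refine IsClosed.inter ?_ (IsClosed.inter ?_ ?_)
    · exact isClosed_iInter fun p => isClosed_eq (by fun_prop) (by fun_prop)
    · exact isClosed_iInter fun p => isClosed_le (by fun_prop) (by fun_prop)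
    · exact isClosed_iInter fun p => isClosed_iInter fun r =>
        (isClosed_le (by fun_prop) (by fun_prop)).inter (isClosed_le (by fun_prop) (by fun_prop))
  · intro x hx p _ r _
    exact hx.2.2 p r

/-- for a concave continuous randomness metric `RM`, the optimal
trade-off curve `RM*(τ)` is concave and non-increasing on `[0,1]`. -/
theorem stmt8 (np nr lp lr : ℕ) (Q : ℝ) (hQ : Q ∈ Set.Icc (0 : ℝ) 1)
    (S : Fin np → Fin nr → ℝ) (hS : ∀ p r, 0 ≤ S p r)
    (hfeas : ∃ x, Feasible np nr lp lr Q x)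
    (RM : (Fin np → Fin nr → ℝ) → ℝ)
    (hRMconc : ConcaveOn ℝ Set.univ RM) (hRMcont : Continuous RM)
    (QOPT : ℝ)
    (hQOPT : QOPT = sSup (Quality S '' {x | Feasible np nr lp lr Q x}))
    (RMstar : ℝ → ℝ)
    (hRMstar : ∀ τ, RMstar τ =
      sSup (RM '' {x | Feasible np nr lp lr Q x ∧ τ * QOPT ≤ Quality S x})) :
    AntitoneOn RMstar (Set.Icc (0 : ℝ) 1) ∧ ConcaveOn ℝ (Set.Icc (0 : ℝ) 1) RMstar := by
  have hF := feasible_compact np nr lp lr Q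
  have hQc := quality_continuous S
  obtain ⟨z, hz, hzmax⟩ := hF.exists_isMaxOn hfeas hQc.continuousOn
  have hzQ : QOPT = Quality S z := by
    rw [hQOPT]
    refine IsGreatest.csSup_eq ⟨⟨z, hz, rfl⟩, ?_⟩
    rintro _ ⟨y, hy, rfl⟩
    exact hzmax hy
  have hQ0 : 0 ≤ QOPT := by
    rw [hzQ]
    exact Finset.sum_nonneg fun p _ => Finset.sum_nonneg fun r _ =>
      mul_nonneg (hz.2.2 p r).1 (hS p r)
  have key : ∀ τ ∈ Set.Icc (0 : ℝ) 1, ∃ x, Feasible np nr lp lr Q x ∧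
      τ * QOPT ≤ Quality S x ∧ RMstar τ = RM x := by
    intro τ hτ
    have hc : IsCompact {x | Feasible np nr lp lr Q x ∧ τ * QOPT ≤ Quality S x} :=
      hF.inter_right (isClosed_le continuous_const hQc)
    have hne : {x | Feasible np nr lp lr Q x ∧ τ * QOPT ≤ Quality S x}.Nonempty :=
      ⟨z, hz, by rw [← hzQ]; exact mul_le_of_le_one_left hQ0 hτ.2⟩
    obtain ⟨x, hx, h⟩ := hc.exists_sSup_image_eq hne hRMcont.continuousOn
    exact ⟨x, hx.1, hx.2, by rw [hRMstar, h]⟩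
  have ub : ∀ τ x, Feasible np nr lp lr Q x → τ * QOPT ≤ Quality S x →
      RM x ≤ RMstar τ := by
    intro τ x hx hq
    rw [hRMstar]
    have hc : IsCompact {x | Feasible np nr lp lr Q x ∧ τ * QOPT ≤ Quality S x} :=
      hF.inter_right (isClosed_le continuous_const hQc)
    exact le_csSup (hc.image hRMcont).bddAbove ⟨x, ⟨hx, hq⟩, rfl⟩
  refine ⟨?_, convex_Icc 0 1, ?_⟩
  · intro s hs t ht hst
    obtain ⟨x, hx, hq, he⟩ := key t ht
    rw [he]
    exact ub s x hx ((mul_le_mul_of_nonneg_right hst hQ0).trans hq)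
  · intro s hs t ht a b ha hb hab
    obtain ⟨x, hx, hxq, hxe⟩ := key s hs
    obtain ⟨y, hy, hyq, hye⟩ := key t ht
    rw [hxe, hye]
    refine (hRMconc.2 (Set.mem_univ x) (Set.mem_univ y) ha hb hab).trans ?_
    refine ub _ _ (feasible_comb hx hy ha hb hab) ?_
    rw [quality_comb]
    simp only [smul_eq_mul]
    have h1 := mul_le_mul_of_nonneg_left hxq ha
    have h2 := mul_le_mul_of_nonneg_left hyq hb
    linarith
end
end

section
/- Fix reals 0 < v₁ < v₂ < … < v_k, a vector s ∈ ℝ^{n_r} with each entry s_r ∈ {v₁,…,v_k}, Q ∈ (0,1], and ℓ_p with 0 < ℓ_p ≤ Q·n_r. Let f be a strictly concave perturbation function with f′(0) < (v_i/v_{i−1})·f′(1) for all i ∈ {2,…,k}. Then every maximizer z of the per-paper perturbed quality z ↦ Σ_r s_r·f(z_r) over D = {z ∈ [0,Q]^{n_r} : Σ_r z_r = ℓ_p} satisfies the greedy fill-order property: for any reviewers r, r′ with s_r > s_{r′}, if z_{r′} > 0 then z_r = Q. -/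
open Finset

noncomputable section

/-- The row-feasible set `D = {z ∈ [0,Q]^{n_r} : Σ_r z_r = ℓ_p}`. -/
def RowFeasible (nr lp : ℕ) (Q : ℝ) (z : Fin nr → ℝ) : Prop :=
  (∀ r, 0 ≤ z r ∧ z r ≤ Q) ∧ ∑ r, z r = (lp : ℝ)

/-- every maximizer of the per-paper perturbed quality over the
row-feasible set satisfies the greedy fill-order property: a less-similar reviewer
gets positive probability only if every more-similar reviewer is saturated at `Q`. -/
theorem stmt13 (nr k lp : ℕ) (v : Fin k → ℝ)
    (hvpos : ∀ i, 0 < v i) (hvmono : StrictMono v)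
    (s : Fin nr → ℝ) (hs : ∀ r, ∃ i, s r = v i)
    (Q : ℝ) (hQ : Q ∈ Set.Ioc (0 : ℝ) 1)
    (hlp0 : 0 < lp) (hlp : (lp : ℝ) ≤ Q * nr)
    (f f' : ℝ → ℝ) (hf : IsPerturbation f)
    (hstrict : StrictConcaveOn ℝ (Set.Icc (0 : ℝ) 1) f)
    (hderiv : ∀ t ∈ Set.Icc (0 : ℝ) 1, HasDerivWithinAt f (f' t) (Set.Icc (0 : ℝ) 1) t)
    (hf' : ∀ i j : Fin k, (i : ℕ) + 1 = (j : ℕ) → f' 0 < v j / v i * f' 1)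
    (z : Fin nr → ℝ)
    (hz : RowFeasible nr lp Q z)
    (hzmax : ∀ w, RowFeasible nr lp Q w →
      ∑ r, s r * f (w r) ≤ ∑ r, s r * f (z r)) :
    ∀ r r', s r' < s r → 0 < z r' → z r = Q := by
  intro r r' hss hpos
  obtain ⟨hz1, hz2⟩ := hz
  obtain ⟨hQ0, hQ1⟩ := hQ
  obtain ⟨hf0, hfm, -, hconc⟩ := hf
  by_contra hne
  have hlt : z r < Q := lt_of_le_of_ne (hz1 r).2 hne
  have hrr : r ≠ r' := by
    rintro rfl
    exact lt_irrefl _ hss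
  have m0 : (0 : ℝ) ∈ Set.Icc (0 : ℝ) 1 := by simp
  have m1 : (1 : ℝ) ∈ Set.Icc (0 : ℝ) 1 := by simp
  have up : ∀ a b, 0 ≤ a → a < b → b ≤ 1 → f b - f a ≤ f' 0 * (b - a) := by
    intro a b ha hab hb
    have mb : b ∈ Set.Icc (0 : ℝ) 1 := ⟨by linarith, hb⟩
    rw [← div_le_iff₀ (by linarith)]
    rcases ha.eq_or_lt with h | h
    · subst h
      have := hconc.slope_le_of_hasDerivWithinAt m0 mb hab (hderiv 0 m0)
      rwa [slope_def_field] at this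
    · have h1 := hconc.slope_anti_adjacent m0 mb h hab
      have h2 := hconc.slope_le_of_hasDerivWithinAt m0 ⟨ha, by linarith⟩ h (hderiv 0 m0)
      rw [slope_def_field] at h2
      exact h1.trans h2
  have lo : ∀ a b, 0 ≤ a → a < b → b ≤ 1 → f' 1 * (b - a) ≤ f b - f a := by
    intro a b ha hab hb
    have ma : a ∈ Set.Icc (0 : ℝ) 1 := ⟨ha, by linarith⟩
    rw [← le_div_iff₀ (by linarith)]
    rcases hb.eq_or_lt with h | h
    · subst h
      have := hconc.le_slope_of_hasDerivWithinAt ma m1 hab (hderiv 1 m1)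
      rwa [slope_def_field] at this
    · have h1 := hconc.slope_anti_adjacent ma m1 hab h
      have h2 := hconc.le_slope_of_hasDerivWithinAt ⟨by linarith, hb⟩ m1 h (hderiv 1 m1)
      rw [slope_def_field] at h2
      exact h2.trans h1
  have hder_zero : 0 ≤ f' 0 := by
    have h1 := up 0 1 le_rfl one_pos le_rfl
    have h2 := (hfm 1 m1).1
    linarith
  have key : s r' * f' 0 < s r * f' 1 := by
    obtain ⟨j, hj⟩ := hs r
    obtain ⟨i, hi⟩ := hs r'
    rw [hi, hj] at hss ⊢
    have hij : i < j := hvmono.lt_iff_lt.mp hss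
    have hij' : (i : ℕ) < (j : ℕ) := hij
    have hjk := j.2
    let m : Fin k := ⟨(i : ℕ) + 1, by omega⟩
    have hm := hf' i m rfl
    have hmj : v m ≤ v j := hvmono.monotone (by
      rw [Fin.le_def]
      exact hij')
    have hvi := hvpos i
    have hvm := hvpos m
    have hp : 0 < f' 1 := by
      have h3 : 0 < v m / v i := div_pos hvm hvi
      exact pos_of_mul_pos_right (lt_of_le_of_lt hder_zero hm) h3.le
    have h4 : v i * f' 0 < v m * f' 1 := by
      have := mul_lt_mul_of_pos_left hm hvi
      have e : v i * (v m / v i * f' 1) = v m * f' 1 := by field_simp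
      linarith
    exact h4.trans_le (mul_le_mul_of_nonneg_right hmj hp.le)
  have hsr : ∀ q, 0 < s q := fun q => by
    obtain ⟨i, hi⟩ := hs q
    rw [hi]
    exact hvpos i
  obtain ⟨e, he0, he1, he2⟩ : ∃ e : ℝ, 0 < e ∧ e ≤ Q - z r ∧ e ≤ z r' :=
    ⟨min (Q - z r) (z r'), lt_min (by linarith) hpos, min_le_left _ _, min_le_right _ _⟩
  let w : Fin nr → ℝ := fun q => if q = r then z r + e else if q = r' then z r' - e else z q
  have wr : w r = z r + e := by simp [w]
  have wr' : w r' = z r' - e := by simp [w, hrr.symm]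
  have wo : ∀ q, q ≠ r ∧ q ≠ r' → w q = z q := fun q hq => by simp [w, hq.1, hq.2]
  have b1 := hz1 r
  have b2 := hz1 r'
  have hw : RowFeasible nr lp Q w := by
    constructor
    · intro q
      by_cases h : q = r
      · subst h
        rw [wr]
        constructor <;> linarith
      · by_cases h' : q = r'
        · subst h'
          rw [wr']
          constructor <;> linarith
        · rw [wo q ⟨h, h'⟩]
          exact hz1 q
    · have : ∑ q, (w q - z q) = (w r - z r) + (w r' - z r') :=
        Fintype.sum_eq_add r r' hrr (fun q hq => by rw [wo q hq, sub_self])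
      rw [Finset.sum_sub_distrib, wr, wr'] at this
      linarith
  have hmax := hzmax w hw
  have hsum : ∑ q, (s q * f (w q) - s q * f (z q)) =
      (s r * f (w r) - s r * f (z r)) + (s r' * f (w r') - s r' * f (z r')) :=
    Fintype.sum_eq_add r r' hrr (fun q hq => by rw [wo q hq, sub_self])
  rw [Finset.sum_sub_distrib, wr, wr'] at hsum
  have g1 := mul_le_mul_of_nonneg_left
    (lo (z r) (z r + e) b1.1 (by linarith) (by linarith)) (hsr r).le
  have g2 := mul_le_mul_of_nonneg_left
    (up (z r' - e) (z r') (by linarith) (by linarith) (by linarith)) (hsr r').le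
  have g3 := mul_lt_mul_of_pos_right key he0
  nlinarith
end
end

section
/- Fix reals 0 < v₁ < v₂ < … < v_k, a vector s ∈ ℝ^{n_r} with each entry s_r ∈ {v₁,…,v_k}, Q ∈ (0,1], and ℓ_p with 0 < ℓ_p ≤ Q·n_r. Let f be a strictly concave perturbation function with f′(0) < (v_i/v_{i−1})·f′(1) for all i ∈ {2,…,k}. Then every maximizer z of the per-paper perturbed quality z ↦ Σ_r s_r·f(z_r) over D = {z ∈ [0,Q]^{n_r} : Σ_r z_r = ℓ_p} assigns equal values to equal similarity levels: s_r = s_{r′} implies z_r = z_{r′}. Consequently, combined with the greedy fill-order property, the maximizer of the per-paper perturbed quality over D is unique. -/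
open Finset

noncomputable section

/-- every maximizer of the per-paper perturbed quality over the
row-feasible set assigns equal values to reviewers with equal similarity, and
(consequently) the maximizer is unique. -/
theorem stmt14 (nr k lp : ℕ) (v : Fin k → ℝ)
    (hvpos : ∀ i, 0 < v i) (hvmono : StrictMono v)
    (s : Fin nr → ℝ) (hs : ∀ r, ∃ i, s r = v i)
    (Q : ℝ) (hQ : Q ∈ Set.Ioc (0 : ℝ) 1)
    (hlp0 : 0 < lp) (hlp : (lp : ℝ) ≤ Q * nr)
    (f f' : ℝ → ℝ) (hf : IsPerturbation f)
    (hstrict : StrictConcaveOn ℝ (Set.Icc (0 : ℝ) 1) f)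
    (hderiv : ∀ t ∈ Set.Icc (0 : ℝ) 1, HasDerivWithinAt f (f' t) (Set.Icc (0 : ℝ) 1) t)
    (hf' : ∀ i j : Fin k, (i : ℕ) + 1 = (j : ℕ) → f' 0 < v j / v i * f' 1)
    (z : Fin nr → ℝ)
    (hz : RowFeasible nr lp Q z)
    (hzmax : ∀ w, RowFeasible nr lp Q w →
      ∑ r, s r * f (w r) ≤ ∑ r, s r * f (z r)) :
    (∀ r r', s r = s r' → z r = z r') ∧
    ∀ z', RowFeasible nr lp Q z' →
      (∀ w, RowFeasible nr lp Q w → ∑ r, s r * f (w r) ≤ ∑ r, s r * f (z' r)) →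
      z' = z := by
  have key : ∀ z', RowFeasible nr lp Q z' →
      (∀ w, RowFeasible nr lp Q w → ∑ r, s r * f (w r) ≤ ∑ r, s r * f (z' r)) →
      z' = z := by
    intro z' hz' hmax'
    by_contra hne
    obtain ⟨r₀, hr₀⟩ := Function.ne_iff.mp hne
    have hspos : ∀ r, 0 < s r := fun r => by
      obtain ⟨i, hi⟩ := hs r
      rw [hi]
      exact hvpos i
    have mem : ∀ r, z r ∈ Set.Icc (0 : ℝ) 1 := fun r =>
      ⟨(hz.1 r).1, (hz.1 r).2.trans hQ.2⟩
    have mem' : ∀ r, z' r ∈ Set.Icc (0 : ℝ) 1 := fun r =>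
      ⟨(hz'.1 r).1, (hz'.1 r).2.trans hQ.2⟩
    have hw : RowFeasible nr lp Q (fun r => (1/2 : ℝ) * z' r + (1/2 : ℝ) * z r) := by
      refine ⟨fun r => ?_, ?_⟩
      · have h1 := hz.1 r
        have h2 := hz'.1 r
        constructor <;> linarith
      · rw [Finset.sum_add_distrib, ← Finset.mul_sum, ← Finset.mul_sum, hz.2, hz'.2]
        ring
    have hlt : ∑ r, s r * ((1/2 : ℝ) * f (z' r) + (1/2 : ℝ) * f (z r)) <
        ∑ r, s r * f ((1/2 : ℝ) * z' r + (1/2 : ℝ) * z r) := by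
      apply Finset.sum_lt_sum
      · intro r _
        apply mul_le_mul_of_nonneg_left _ (hspos r).le
        have := hstrict.concaveOn.2 (mem' r) (mem r)
          (show (0:ℝ) ≤ 1/2 by norm_num) (show (0:ℝ) ≤ 1/2 by norm_num) (by norm_num)
        simpa only [smul_eq_mul] using this
      · refine ⟨r₀, Finset.mem_univ _, mul_lt_mul_of_pos_left ?_ (hspos r₀)⟩
        have := hstrict.2 (mem' r₀) (mem r₀) hr₀
          (show (0:ℝ) < 1/2 by norm_num) (show (0:ℝ) < 1/2 by norm_num) (by norm_num)
        simpa only [smul_eq_mul] using this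
    have heq : ∑ r, s r * ((1/2 : ℝ) * f (z' r) + (1/2 : ℝ) * f (z r)) =
        (1/2 : ℝ) * ∑ r, s r * f (z' r) + (1/2 : ℝ) * ∑ r, s r * f (z r) := by
      rw [Finset.mul_sum, Finset.mul_sum, ← Finset.sum_add_distrib]
      exact Finset.sum_congr rfl fun r _ => by ring
    have h1 := hzmax _ hw
    have h2 := hmax' _ hw
    linarith
  refine ⟨fun r r' hrr => ?_, key⟩
  have hss : ∀ t, s (Equiv.swap r r' t) = s t := by
    intro t
    rw [Equiv.swap_apply_def]
    split_ifs with h1 h2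
    · rw [h1, hrr]
    · rw [h2, hrr]
    · rfl
  have hsw := key (fun t => z (Equiv.swap r r' t))
    ⟨fun t => hz.1 _, by rw [Equiv.sum_comp (Equiv.swap r r') z]; exact hz.2⟩
    (by
      intro w hw
      refine (hzmax w hw).trans (le_of_eq ?_)
      rw [← Equiv.sum_comp (Equiv.swap r r') (fun t => s t * f (z t))]
      exact Finset.sum_congr rfl fun t _ => by rw [hss])
  have := congrFun hsw r'
  simpa using this
end
end
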